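/- arXiv:2404.11344 — 2 statements merged into one kernel-verified Lean document; each statement's English description precedes it below -/
import Mathlib

section
/- Let N be a natural number and r : Fin N → Fin N → Prop a relation (a set of design inequalities). Let L be the number of permutations σ : Fin N ≃ Fin N such that σ j < σ i whenever r i j (the number of total orders, or linear extensions, consistent with the inequalities). Then the Lebesgue volume of the set { x : Fin N → ℝ | (∀ i, 0 ≤ x i ∧ x i ≤ 1) ∧ (∀ i j, r i j → x j < x i) } equals L / N!. (The fractional volume in design space of a set of design inequalities equals its number of consistent total orders divided by N factorial.) -/
open MeasureTheory

/-! Take any probability measure that is invariant under permuting the coordinates and gives ties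
measure zero, such as the uniform one on the cube. Almost every point then has pairwise distinct
coordinates and so determines a ranking of them. Up to a null set, the space is therefore the
disjoint union of the `N!` cells on which the ranking is fixed, and the region cut out by the
inequalities is the union of the cells of the consistent rankings. Permuting the coordinates carries
any cell to any other, so each cell has measure `1 / N!`. -/

section OrderCell

variable {ι κ α β : Type*} [LinearOrder α]

variable (α) in
/-- The cell of points whose coordinates are ordered in the way `f` orders the indices. For a
bijection `f` onto a linear order, `f i` is then the rank of the `i`-th coordinate; these cells
partition the points with pairwise distinct coordinates. -/
def orderCell [LT β] (f : ι → β) : Set (ι → α) :=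
  {x | ∀ i j, x i < x j ↔ f i < f j}

theorem preimage_comp_orderCell [LT β] (f : ι → β) (τ : Equiv.Perm ι) :
    (fun x : ι → α ↦ x ∘ τ) ⁻¹' orderCell α (f ∘ τ) = orderCell α f := by
  ext x
  exact (τ.surjective.forall₂ (p := fun i j ↦ x i < x j ↔ f i < f j)).symm

theorem pairwise_disjoint_orderCell [LinearOrder κ] [WellFoundedLT κ] :
    Pairwise (Function.onFun Disjoint fun e : ι ≃ κ ↦ orderCell α e) := by
  intro e e' hne
  refine Set.disjoint_left.2 fun x hx hx' ↦ hne ?_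
  let φ : κ ≃o κ := .ofRelIsoLT ⟨e.symm.trans e', fun {a b} ↦ by
    simp only [Equiv.trans_apply, ← hx' _ _, hx _ _, e.apply_symm_apply]⟩
  have rank_eq : ∀ a, e' (e.symm a) = a :=
    DFunLike.congr_fun (Subsingleton.elim φ (OrderIso.refl κ))
  ext i
  simpa only [e.symm_apply_apply] using (rank_eq (e i)).symm

theorem exists_mem_orderCell [Finite ι] [LinearOrder κ] [Nonempty (ι ≃ κ)] {x : ι → α}
    (hx : Function.Injective x) : ∃ e : ι ≃ κ, x ∈ orderCell α e := by
  cases nonempty_fintype ι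
  obtain ⟨e₀⟩ := ‹Nonempty (ι ≃ κ)›
  let _ : Fintype κ := Fintype.ofEquiv ι e₀
  let _ : LinearOrder ι := LinearOrder.lift' x hx
  let φ : ι ≃o κ := (monoEquivOfFin ι (Fintype.card_congr e₀)).symm.trans (monoEquivOfFin κ rfl)
  exact ⟨φ.toEquiv, fun i j ↦ φ.lt_iff_lt.symm⟩

theorem measurableSet_orderCell [Countable ι] [LT β] [TopologicalSpace α] [OrderClosedTopology α]
    [SecondCountableTopology α] [MeasurableSpace α] [OpensMeasurableSpace α] (f : ι → β) :
    MeasurableSet (orderCell α f) := by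
  simp only [orderCell, Set.ofPred_forall]
  exact .iInter fun i ↦ .iInter fun j ↦
    (measurableSet_lt (measurable_pi_apply i) (measurable_pi_apply j)).iff (.const _)

end OrderCell

theorem setOf_forall_lt_ae_eq_iUnion_orderCell {ι κ α : Type*} [Finite ι] [LinearOrder κ]
    [Nonempty (ι ≃ κ)] [LinearOrder α] [MeasurableSpace α] {ν : Measure (ι → α)}
    (hinj : ∀ᵐ x ∂ν, Function.Injective x) (r : ι → ι → Prop) :
    {x : ι → α | ∀ i j, r i j → x j < x i} =ᵐ[ν]
      ⋃ e : {e : ι ≃ κ // ∀ i j, r i j → e j < e i}, orderCell α e.1 := by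
  rw [Filter.eventuallyEq_set]
  filter_upwards [hinj] with x hx
  rw [Set.mem_iUnion]
  constructor
  · intro hr
    obtain ⟨e, he⟩ := exists_mem_orderCell (κ := κ) hx
    exact ⟨⟨e, fun i j hij ↦ (he j i).1 (hr i j hij)⟩, he⟩
  · rintro ⟨⟨e, hr⟩, he⟩ i j hij
    exact (he j i).2 (hr i j hij)

section Exchangeable

variable {ι κ α : Type*} [LinearOrder κ] [LinearOrder α] [TopologicalSpace α]
  [OrderClosedTopology α] [SecondCountableTopology α] [MeasurableSpace α] [OpensMeasurableSpace α]
  {ν : Measure (ι → α)}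

theorem measure_orderCell_eq [Countable ι]
    (hperm : ∀ τ : Equiv.Perm ι, MeasurePreserving (fun x ↦ x ∘ τ) ν ν) (e e' : ι ≃ κ) :
    ν (orderCell α e) = ν (orderCell α e') := by
  let τ : Equiv.Perm ι := e'.trans e.symm
  have comp_eq : e ∘ τ = e' := funext fun i ↦ e.apply_symm_apply (e' i)
  rw [← preimage_comp_orderCell e τ, comp_eq,
    (hperm τ).measure_preimage (measurableSet_orderCell e').nullMeasurableSet]

theorem measure_setOf_forall_lt_eq_card_mul [Finite ι]
    (hperm : ∀ τ : Equiv.Perm ι, MeasurePreserving (fun x ↦ x ∘ τ) ν ν)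
    (hinj : ∀ᵐ x ∂ν, Function.Injective x) (r : ι → ι → Prop) (e₀ : ι ≃ κ) :
    ν {x | ∀ i j, r i j → x j < x i} =
      Nat.card {e : ι ≃ κ // ∀ i j, r i j → e j < e i} * ν (orderCell α e₀) := by
  have : Nonempty (ι ≃ κ) := ⟨e₀⟩
  have : Finite κ := .of_equiv ι e₀
  rw [measure_congr (setOf_forall_lt_ae_eq_iUnion_orderCell (κ := κ) hinj r),
    measure_iUnion (pairwise_disjoint_orderCell.comp_of_injective Subtype.val_injective)
      fun e ↦ measurableSet_orderCell e.1]
  simp only [measure_orderCell_eq hperm _ e₀, ENNReal.tsum_const, ENat.card_eq_coe_natCard,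
    ENat.toENNReal_coe]

theorem measure_orderCell [Finite ι] [IsProbabilityMeasure ν]
    (hperm : ∀ τ : Equiv.Perm ι, MeasurePreserving (fun x ↦ x ∘ τ) ν ν)
    (hinj : ∀ᵐ x ∂ν, Function.Injective x) (e : ι ≃ κ) :
    ν (orderCell α e) = ((Nat.card ι).factorial : ENNReal)⁻¹ := by
  have card_eq : Nat.card {e : ι ≃ κ // ∀ i j : ι, False → e j < e i} = (Nat.card ι).factorial := by
    rw [← Nat.card_perm]
    exact Nat.card_congr ((Equiv.subtypeUnivEquiv fun _ _ _ ↦ False.elim).trans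
      (Equiv.equivCongr (.refl ι) e.symm))
  have h := measure_setOf_forall_lt_eq_card_mul hperm hinj (fun _ _ ↦ False) e
  rw [card_eq, mul_comm] at h
  simp only [false_imp_iff, implies_true, Set.ofPred_true, measure_univ] at h
  exact ENNReal.eq_inv_of_mul_eq_one_left h.symm

theorem volume_eq_linear_extensions_div_factorial_general [Finite ι] [Nonempty (ι ≃ κ)]
    [IsProbabilityMeasure ν]
    (hperm : ∀ τ : Equiv.Perm ι, MeasurePreserving (fun x ↦ x ∘ τ) ν ν)
    (hinj : ∀ᵐ x ∂ν, Function.Injective x) (r : ι → ι → Prop) :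
    ν {x | ∀ i j, r i j → x j < x i} =
      Nat.card {e : ι ≃ κ // ∀ i j, r i j → e j < e i} / ((Nat.card ι).factorial : ENNReal) := by
  obtain ⟨e₀⟩ := ‹Nonempty (ι ≃ κ)›
  rw [measure_setOf_forall_lt_eq_card_mul hperm hinj r e₀, measure_orderCell hperm hinj,
    div_eq_mul_inv]

end Exchangeable

section Product

variable {ι α : Type*} [Fintype ι] [MeasurableSpace α]

theorem measurePreserving_comp_perm_pi (μ : Measure α) [SigmaFinite μ] (τ : Equiv.Perm ι) :
    MeasurePreserving (fun x : ι → α ↦ x ∘ τ) (.pi fun _ ↦ μ) (.pi fun _ ↦ μ) :=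
  measurePreserving_arrowCongr' _ _ τ.symm (.refl α) fun _ ↦ .id μ

theorem measure_prod_diagonal_eq_zero [MeasurableEq α] (μ μ' : Measure α) [SFinite μ']
    [NullSingletonClass μ'] : μ.prod μ' (Set.diagonal α) = 0 := by
  refine Measure.measure_prod_null_of_ae_null measurableSet_diagonal (.of_forall fun a ↦ ?_)
  have fiber_eq : Prod.mk a ⁻¹' Set.diagonal α = {a} := by ext; simp [eq_comm]
  simp only [fiber_eq, measure_singleton, Pi.zero_apply]

theorem ae_pi_eval_ne_eval [MeasurableEq α] (μ : ι → Measure α) [∀ i, IsProbabilityMeasure (μ i)]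
    {i j : ι} [NullSingletonClass (μ j)] (hij : i ≠ j) :
    ∀ᵐ x ∂(Measure.pi μ), x i ≠ x j := by
  have hpair : MeasurePreserving (fun x : ι → α ↦ (x i, x j)) (.pi μ) ((μ i).prod (μ j)) := by
    refine ⟨by fun_prop, ?_⟩
    have indep := (ProbabilityTheory.iIndepFun_pi (μ := μ) fun _ ↦ aemeasurable_id).indepFun hij
    simpa only [id_eq, (measurePreserving_eval μ _).map_eq] using
      indep.map_prod_eq_prod_map_map (measurable_pi_apply i).aemeasurable
        (measurable_pi_apply j).aemeasurable
  exact hpair.quasiMeasurePreserving.ae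
    (measure_eq_zero_iff_ae_notMem.1 (measure_prod_diagonal_eq_zero (μ i) (μ j)))

theorem ae_pi_injective [MeasurableEq α] (μ : ι → Measure α) [∀ i, IsProbabilityMeasure (μ i)]
    [∀ i, NullSingletonClass (μ i)] : ∀ᵐ x ∂(Measure.pi μ), Function.Injective x := by
  have h : ∀ᵐ x ∂(Measure.pi μ), ∀ i j, i ≠ j → x i ≠ x j :=
    ae_all_iff.2 fun i ↦ ae_all_iff.2 fun j ↦ Filter.eventually_all.2 (ae_pi_eval_ne_eval μ)
  filter_upwards [h] with x hx i j
  exact not_imp_not.1 (hx i j)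

end Product

theorem volume_unitCube_inter {ι : Type*} [Fintype ι] (s : Set (ι → ℝ)) :
    volume ({x | ∀ i, 0 ≤ x i ∧ x i ≤ 1} ∩ s) =
      Measure.pi (fun _ ↦ volume.restrict (Set.Icc (0 : ℝ) 1)) s := by
  have cube_eq : {x : ι → ℝ | ∀ i, 0 ≤ x i ∧ x i ≤ 1} = Set.univ.pi fun _ ↦ Set.Icc 0 1 := by
    ext x
    simp only [Set.mem_univ_pi, Set.mem_Icc, Set.mem_ofPred_eq]
  rw [cube_eq, ← Measure.restrict_pi_pi, ← volume_pi,
    Measure.restrict_apply' (.univ_pi fun _ ↦ measurableSet_Icc), Set.inter_comm]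

/-- The fractional volume in design space of a set of design inequalities equals its
number of consistent total orders (linear extensions) divided by `N!`. -/
theorem volume_eq_linear_extensions_div_factorial (N : ℕ) (r : Fin N → Fin N → Prop) :
    volume {x : Fin N → ℝ |
        (∀ i, 0 ≤ x i ∧ x i ≤ 1) ∧ ∀ i j, r i j → x j < x i}
      = (Nat.card {σ : Equiv.Perm (Fin N) // ∀ i j, r i j → σ j < σ i} : ENNReal)
          / (Nat.factorial N : ENNReal) := by
  have : IsProbabilityMeasure (volume.restrict (Set.Icc (0 : ℝ) 1)) := ⟨by simp⟩
  rw [Set.ofPred_and, volume_unitCube_inter, volume_eq_linear_extensions_div_factorial_general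
    (κ := Fin N) (measurePreserving_comp_perm_pi _) (ae_pi_injective _), Nat.card_fin]
end

section
/- Let N, k be natural numbers and let a, b : Fin k → Fin N be such that the 2k values a 0, …, a (k−1), b 0, …, b (k−1) are pairwise distinct. Then the number of permutations σ : Fin N ≃ Fin N satisfying σ (a i) < σ (b i) for every i : Fin k, multiplied by 2^k, equals N!. (Imposing k independent pairwise inequalities on disjoint pairs of switching fields reduces the number of total orders by a factor 2^k.) -/
/-!
Precomposing with the transposition of `a j` and `b j` reverses the `j`-th inequality and, as the
pairs are disjoint, leaves every other one alone. Hence each inequality added to those already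
imposed is satisfied by exactly half of the remaining orders.
-/

open Function

theorem ncard_inter_mul_two_of_involutive {X : Type*} {s t : Set X} {g : X → X} (hs : s.Finite)
    (hg : Involutive g) (hgs : Set.MapsTo g s s) (hgt : ∀ x ∈ s, g x ∈ t ↔ x ∉ t) :
    (s ∩ t).ncard * 2 = s.ncard := by
  have image_eq_diff : g '' (s ∩ t) = s \ t := by
    rw [Set.image_eq_preimage_of_inverse hg hg]
    ext x
    exact ⟨fun ⟨hx, hxt⟩ => have hxs := hg x ▸ hgs hx; ⟨hxs, (hgt x hxs).1 hxt⟩,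
      fun ⟨hx, hxt⟩ => ⟨hgs hx, (hgt x hx).2 hxt⟩⟩
  calc (s ∩ t).ncard * 2 = (s ∩ t).ncard + (g '' (s ∩ t)).ncard := by
        rw [Set.ncard_image_of_injective _ hg.injective, mul_two]
    _ = s.ncard := by rw [image_eq_diff, Set.ncard_inter_add_ncard_sdiff_eq_ncard s t hs]

section PairwiseInequalities

variable {ι α β : Type*} {a b : ι → α}

/-- The injective rankings `f` of `α` in `β` with `f (a i) < f (b i)` for all `i ∈ s`. Restricting
the indices to `s` allows the inequalities to be imposed one at a time. -/
def embeddingsSatisfying (β : Type*) [LT β] (a b : ι → α) (s : Set ι) : Set (α ↪ β) :=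
  {f | ∀ i ∈ s, f (a i) < f (b i)}

theorem embeddingsSatisfying_empty [LT β] : embeddingsSatisfying β a b ∅ = Set.univ := by
  simp [embeddingsSatisfying]

theorem embeddingsSatisfying_insert [LT β] (j : ι) (s : Set ι) :
    embeddingsSatisfying β a b (insert j s) =
      embeddingsSatisfying β a b s ∩ {f | f (a j) < f (b j)} := by
  ext f
  simp [embeddingsSatisfying, and_comm]

/-- Exchanging the values of an embedding at `x` and `y`, by precomposition with the transposition
of `x` and `y`; this is the involution that reverses an inequality between `x` and `y`. -/
def swapValues [DecidableEq α] (x y : α) (f : α ↪ β) : α ↪ β :=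
  (Equiv.swap x y).toEmbedding.trans f

theorem swapValues_apply [DecidableEq α] (x y z : α) (f : α ↪ β) :
    swapValues x y f z = f (Equiv.swap x y z) :=
  rfl

theorem swapValues_involutive [DecidableEq α] (x y : α) :
    Involutive (swapValues x y : (α ↪ β) → (α ↪ β)) := fun f => by
  ext z
  simp only [swapValues_apply, Equiv.swap_apply_self]

theorem swapValues_lt_iff_not_lt [DecidableEq α] [LinearOrder β] {x y : α} (hxy : x ≠ y)
    (f : α ↪ β) : swapValues x y f x < swapValues x y f y ↔ ¬ f x < f y := by
  rw [swapValues_apply, swapValues_apply, Equiv.swap_apply_left, Equiv.swap_apply_right, not_lt]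
  exact (f.injective.ne hxy.symm).le_iff_lt.symm

theorem mapsTo_swapValues_embeddingsSatisfying [DecidableEq α] [LT β]
    (hab : Injective (Sum.elim a b)) {j : ι} {s : Set ι} (hj : j ∉ s) :
    Set.MapsTo (swapValues (a j) (b j)) (embeddingsSatisfying β a b s)
      (embeddingsSatisfying β a b s) := by
  obtain ⟨ha, hb, ha_ne_b⟩ := Sum.elim_injective.1 hab
  intro f hf i hi
  have hij : i ≠ j := ne_of_mem_of_not_mem hi hj
  rw [swapValues_apply, swapValues_apply,
    Equiv.swap_apply_of_ne_of_ne (ha.ne hij) (ha_ne_b i j),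
    Equiv.swap_apply_of_ne_of_ne (ha_ne_b j i).symm (hb.ne hij)]
  exact hf i hi

variable [Finite β] [LinearOrder β]

theorem ncard_embeddingsSatisfying_insert_mul_two (hab : Injective (Sum.elim a b)) {j : ι}
    {s : Set ι} (hj : j ∉ s) :
    (embeddingsSatisfying β a b (insert j s)).ncard * 2 = (embeddingsSatisfying β a b s).ncard := by
  classical
  rw [embeddingsSatisfying_insert]
  exact ncard_inter_mul_two_of_involutive (Set.toFinite _) (swapValues_involutive (a j) (b j))
    (mapsTo_swapValues_embeddingsSatisfying hab hj)
    fun f _ => swapValues_lt_iff_not_lt ((Sum.elim_injective.1 hab).2.2 j j) f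

theorem ncard_embeddingsSatisfying_mul_two_pow (hab : Injective (Sum.elim a b)) {s : Set ι}
    (hs : s.Finite) :
    (embeddingsSatisfying β a b s).ncard * 2 ^ s.ncard = Nat.card (α ↪ β) := by
  induction s, hs using Set.Finite.induction_on with
  | empty => simp [embeddingsSatisfying_empty]
  | @insert j s hj hs ih =>
    rw [Set.ncard_insert_of_notMem hj hs, pow_succ', ← mul_assoc,
      ncard_embeddingsSatisfying_insert_mul_two hab hj, ih]

theorem card_perms_with_disjoint_pairwise_inequalities_general [Finite ι]
    (hab : Injective (Sum.elim a b)) :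
    Nat.card {f : α ↪ β // ∀ i, f (a i) < f (b i)} * 2 ^ Nat.card ι = Nat.card (α ↪ β) := by
  have card_eq_ncard : Nat.card {f : α ↪ β // ∀ i, f (a i) < f (b i)} =
      (embeddingsSatisfying β a b Set.univ).ncard :=
    Nat.card_congr (Equiv.subtypeEquivRight fun _ => by simp [embeddingsSatisfying])
  rw [card_eq_ncard, ← Set.ncard_univ,
    ncard_embeddingsSatisfying_mul_two_pow hab Set.finite_univ]

end PairwiseInequalities

/-- Imposing `k` independent pairwise inequalities on disjoint pairs of switching fields
reduces the number of total orders by a factor `2^k`. -/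
theorem card_perms_with_disjoint_pairwise_inequalities (N k : ℕ)
    (a b : Fin k → Fin N)
    (hdist : Function.Injective (Sum.elim a b : Fin k ⊕ Fin k → Fin N)) :
    Nat.card {σ : Equiv.Perm (Fin N) // ∀ i : Fin k, σ (a i) < σ (b i)} * 2 ^ k
      = Nat.factorial N := by
  rw [← Nat.card_congr ((Equiv.embeddingEquivOfFinite (Fin N)).subtypeEquiv
    (p := fun f => ∀ i, f (a i) < f (b i)) fun _ => Iff.rfl)]
  simpa [Nat.descFactorial_self] using
    card_perms_with_disjoint_pairwise_inequalities_general (β := Fin N) hdist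
end
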